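/- arXiv:1602.09046 — 2 statements merged into one kernel-verified Lean document; each statement's English description precedes it below -/
import Mathlib

section
/- Let n ≥ 1 and let z₁, …, zₙ be complex numbers such that there is a unique index i₀ with Re(z_{i₀}) > Re(zᵢ) for all i ≠ i₀. Then the complex softmax functional softmax_α(z₁,…,zₙ) := (∑ᵢ zᵢ e^{α zᵢ}) / (∑ⱼ e^{α zⱼ}), with real parameter α and complex exponentials, converges to z_{i₀} as α → +∞ (in particular the denominator is nonzero for all sufficiently large α). -/
/-! The softmax is the center of mass of the `zᵢ` with complex weights `wᵢ = exp (α zᵢ)`. Since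
`|wᵢ| = exp (α Re zᵢ)`, every weight other than `w_{i₀}` is negligible compared with `w_{i₀}`, so
`w_{i₀} ~ ∑ⱼ wⱼ`: the sum cannot vanish for large `α`, and the normalized weights tend to `1` at
`i₀` and to `0` elsewhere. -/

open Filter Topology Asymptotics

section DominantWeight

variable {ι β : Type*} {l : Filter β} {s : Finset ι} {i₀ : ι}

theorem isEquivalent_sum_of_isLittleO {V : Type*} [NormedAddCommGroup V] {w : ι → β → V}
    (hi₀ : i₀ ∈ s) (hw : ∀ i ∈ s, i ≠ i₀ → w i =o[l] w i₀) :
    (fun x => ∑ i ∈ s, w i x) ~[l] w i₀ := by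
  classical
  have hrest : (fun x => ∑ i ∈ s.erase i₀, w i x) =o[l] w i₀ :=
    IsLittleO.fun_sum fun i hi => hw i (Finset.mem_of_mem_erase hi) (Finset.ne_of_mem_erase hi)
  refine (IsEquivalent.refl.add_isLittleO hrest).congr_left (.of_forall fun x => ?_)
  exact Finset.add_sum_erase s (fun i => w i x) hi₀

theorem eventually_sum_ne_zero_of_isLittleO {V : Type*} [NormedAddCommGroup V] {w : ι → β → V}
    (hi₀ : i₀ ∈ s) (hne : ∀ᶠ x in l, w i₀ x ≠ 0) (hw : ∀ i ∈ s, i ≠ i₀ → w i =o[l] w i₀) :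
    ∀ᶠ x in l, ∑ i ∈ s, w i x ≠ 0 := by
  filter_upwards [hne, (isEquivalent_sum_of_isLittleO hi₀ hw).isTheta.eq_zero_iff] with x hx hiff
  exact mt hiff.mp hx

variable {𝕜 : Type*} [NormedField 𝕜] {w : ι → β → 𝕜}

theorem tendsto_div_sum_nhds_one_of_isLittleO (hi₀ : i₀ ∈ s) (hne : ∀ᶠ x in l, w i₀ x ≠ 0)
    (hw : ∀ i ∈ s, i ≠ i₀ → w i =o[l] w i₀) :
    Tendsto (fun x => w i₀ x / ∑ j ∈ s, w j x) l (𝓝 1) :=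
  (isEquivalent_iff_tendsto_one (eventually_sum_ne_zero_of_isLittleO hi₀ hne hw)).mp
    (isEquivalent_sum_of_isLittleO hi₀ hw).symm

theorem tendsto_div_sum_nhds_zero_of_isLittleO {i : ι} (hi₀ : i₀ ∈ s) (hi : i ∈ s) (hii₀ : i ≠ i₀)
    (hw : ∀ i ∈ s, i ≠ i₀ → w i =o[l] w i₀) :
    Tendsto (fun x => w i x / ∑ j ∈ s, w j x) l (𝓝 0) :=
  ((hw i hi hii₀).trans_isTheta
    (isEquivalent_sum_of_isLittleO hi₀ hw).isTheta_symm).tendsto_div_nhds_zero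

theorem tendsto_centerMass_of_isLittleO {E : Type*} [AddCommGroup E] [Module 𝕜 E]
    [TopologicalSpace E] [ContinuousAdd E] [ContinuousSMul 𝕜 E] (v : ι → E)
    (hi₀ : i₀ ∈ s) (hne : ∀ᶠ x in l, w i₀ x ≠ 0) (hw : ∀ i ∈ s, i ≠ i₀ → w i =o[l] w i₀) :
    Tendsto (fun x => s.centerMass (fun i => w i x) v) l (𝓝 (v i₀)) := by
  classical
  have hterm : ∀ i ∈ s, Tendsto (fun x => (w i x / ∑ j ∈ s, w j x) • v i) l
      (𝓝 (if i = i₀ then v i else 0)) := by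
    intro i hi
    obtain rfl | hii₀ := eq_or_ne i i₀
    · simpa using (tendsto_div_sum_nhds_one_of_isLittleO hi₀ hne hw).smul_const (v i)
    · simpa [hii₀] using (tendsto_div_sum_nhds_zero_of_isLittleO hi₀ hi hii₀ hw).smul_const (v i)
  have hsum := tendsto_finsetSum s hterm
  rw [Finset.sum_ite_eq_of_mem' s i₀ v hi₀] at hsum
  simpa only [Finset.centerMass, Finset.smul_sum, smul_smul, ← div_eq_inv_mul] using hsum

end DominantWeight

theorem isLittleO_cexp_ofReal_mul_atTop {z w : ℂ} (h : z.re < w.re) :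
    (fun α : ℝ => Complex.exp (α * z)) =o[atTop] fun α : ℝ => Complex.exp (α * w) := by
  rw [← isLittleO_norm_norm]
  simp only [Complex.norm_exp, Complex.re_ofReal_mul, Real.isLittleO_exp_comp_exp_comp, ← mul_sub]
  exact tendsto_id.atTop_mul_const (sub_pos.mpr h)

theorem complex_softmax_tendsto_argmax_re_general {ι E : Type*} [AddCommGroup E] [Module ℂ E]
    [TopologicalSpace E] [ContinuousAdd E] [ContinuousSMul ℂ E] {s : Finset ι} {i₀ : ι}
    (z : ι → ℂ) (v : ι → E) (hi₀ : i₀ ∈ s) (hmax : ∀ i ∈ s, i ≠ i₀ → (z i).re < (z i₀).re) :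
    (∀ᶠ α : ℝ in atTop, ∑ j ∈ s, Complex.exp (α * z j) ≠ 0) ∧
    Tendsto (fun α : ℝ => s.centerMass (fun i => Complex.exp (α * z i)) v) atTop (𝓝 (v i₀)) := by
  let w (i : ι) (α : ℝ) : ℂ := Complex.exp (α * z i)
  have hne : ∀ᶠ α in atTop, w i₀ α ≠ 0 := .of_forall fun α => Complex.exp_ne_zero _
  have hw : ∀ i ∈ s, i ≠ i₀ → w i =o[atTop] w i₀ := fun i hi hii₀ =>
    isLittleO_cexp_ofReal_mul_atTop (hmax i hi hii₀)
  exact ⟨eventually_sum_ne_zero_of_isLittleO hi₀ hne hw,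
    tendsto_centerMass_of_isLittleO v hi₀ hne hw⟩

/-- **Complex softmax at `α → +∞`.** For complex numbers `z₁, …, zₙ` (`n ≥ 1`) with a
unique index `i₀` of strictly maximal real part, the complex softmax
`softmax_α(z) = (∑ᵢ zᵢ e^{α zᵢ}) / (∑ⱼ e^{α zⱼ})` converges to `z_{i₀}` as `α → +∞`,
and in particular the denominator is nonzero for all sufficiently large `α`. -/
theorem complex_softmax_tendsto_argmax_re (n : ℕ) (z : Fin (n + 1) → ℂ) (i₀ : Fin (n + 1))
    (hmax : ∀ i, i ≠ i₀ → (z i).re < (z i₀).re) :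
    (∀ᶠ α : ℝ in Filter.atTop, (∑ j, Complex.exp ((α : ℂ) * z j)) ≠ 0) ∧
    Filter.Tendsto
      (fun α : ℝ =>
        (∑ i, z i * Complex.exp ((α : ℂ) * z i)) / (∑ j, Complex.exp ((α : ℂ) * z j)))
      Filter.atTop (nhds (z i₀)) := by
  simpa only [Finset.centerMass, smul_eq_mul, div_eq_inv_mul, mul_comm (z _)] using
    complex_softmax_tendsto_argmax_re_general z z (Finset.mem_univ i₀) fun i _ => hmax i
end

section
/- Let z ∈ ℂⁿ, δ ∈ ℂᵐ, b ∈ ℂᵐ, and let g : ℂᵐ → ℝ be real-differentiable at w₀ := Wz + b for a given m × n complex matrix W, with (complex-identified) gradient ∇g(w₀) = δ. Write W = A + iB with real matrices A, B, and regard ℓ(A, B) := g((A + iB)z + b) as a real-differentiable function of the real entries of A and B. Then the matrix of Wirtinger weight gradients satisfies ∂ℓ/∂A + i·∂ℓ/∂B = δ · zᴴ, i.e., for all indices p, q: (∂ℓ/∂A[p,q]) + i·(∂ℓ/∂B[p,q]) = δ_p · conj(z_q). -/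
/-- The loss of an affine layer, `ℓ(A, B) = g((A + iB)z + b)`, viewed as a real-valued
function of the real matrices `A` and `B` (encoded as functions `Fin m → Fin n → ℝ`). -/
noncomputable def affineLayerLoss (m n : ℕ) (g : (Fin m → ℂ) → ℝ) (z : Fin n → ℂ) (b : Fin m → ℂ)
    (AB : (Fin m → Fin n → ℝ) × (Fin m → Fin n → ℝ)) : ℝ :=
  g fun p => (∑ q, ((AB.1 p q : ℂ) + Complex.I * (AB.2 p q : ℂ)) * z q) + b p

/-!
For a real functional `f` on a complex vector space, `v ↦ f(v) + i·f(iv)` is the complex conjugate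
of the complex-linear extension of `f`, hence conjugate-linear in `v`. Perturbing the entry
`A[p,q]`, respectively `B[p,q]`, moves `(A + iB)z + b` in the direction `z_q e_p`, respectively
`i z_q e_p`. By the chain rule, the complex-identified gradient of the loss in the weight `W[p,q]`
is therefore that of `g` in the direction `z_q e_p`, and conjugate-linearity takes `z_q` out as
`conj z_q`.
-/

open Complex ComplexConjugate

section ComplexDirectionalGradient

variable {V : Type*} [AddCommGroup V] [Module ℝ V] [Module ℂ V]

/-- The complex-identified gradient `f(v) + i·f(iv)` of a real functional `f` in the complex
direction `v`. On `ℂᵐ`, with `f` the derivative of a loss at a point and `v` the `k`-th standard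
basis vector, it is the `k`-th entry of the gradient of the loss. -/
noncomputable def complexDirectionalGradient (f : Module.Dual ℝ V) (v : V) : ℂ :=
  f v + I * f (I • v)

theorem complexDirectionalGradient_eq_conj_extendRCLike [IsScalarTower ℝ ℂ V]
    (f : Module.Dual ℝ V) (v : V) :
    complexDirectionalGradient f v = conj (f.extendRCLike v : ℂ) := by
  simp [complexDirectionalGradient, Module.Dual.extendRCLike_apply]

theorem complexDirectionalGradient_smul [IsScalarTower ℝ ℂ V] (f : Module.Dual ℝ V) (c : ℂ)
    (v : V) :
    complexDirectionalGradient f (c • v) = complexDirectionalGradient f v * conj c := by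
  simp only [complexDirectionalGradient_eq_conj_extendRCLike, map_smul, smul_eq_mul, map_mul,
    mul_comm]

end ComplexDirectionalGradient

theorem complexDirectionalGradient_single {ι : Type*} [DecidableEq ι]
    (f : Module.Dual ℝ (ι → ℂ)) (p : ι) (c : ℂ) :
    complexDirectionalGradient f (Pi.single p c) =
      f (Pi.single p c) + I * f (Pi.single p (I * c)) := by
  rw [complexDirectionalGradient, ← Pi.single_smul, smul_eq_mul]

theorem complexDirectionalGradient_single_eq_mul_conj {ι : Type*} [DecidableEq ι]
    (f : Module.Dual ℝ (ι → ℂ)) (p : ι) (c : ℂ) :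
    complexDirectionalGradient f (Pi.single p c) =
      complexDirectionalGradient f (Pi.single p 1) * conj c := by
  rw [← complexDirectionalGradient_smul, ← Pi.single_smul, smul_eq_mul, mul_one]

section MulVec

variable {ι κ : Type*} [Fintype κ]

section RealMulVec

variable {E : Type*} [AddCommGroup E] [Module ℝ E] [TopologicalSpace E]
  [IsTopologicalAddGroup E] [ContinuousSMul ℝ E]

/-- The continuous real-linear map `A ↦ Az` on real `ι × κ` matrices, for a column `z` of vectors
in a real topological vector space. As in `affineLayerLoss`, matrices are encoded as functions
`ι → κ → ℝ`. -/
noncomputable def realMulVecCLM (z : κ → E) : (ι → κ → ℝ) →L[ℝ] (ι → E) :=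
  .piMap fun _ => (Fintype.linearCombination ℝ z).toContinuousLinearMap

theorem realMulVecCLM_apply (z : κ → E) (A : ι → κ → ℝ) (p : ι) :
    realMulVecCLM z A p = ∑ q, A p q • z q :=
  rfl

theorem realMulVecCLM_single_single [DecidableEq ι] [DecidableEq κ] (z : κ → E) (p : ι) (q : κ)
    (r : ℝ) : realMulVecCLM z (Pi.single p (Pi.single q r)) = Pi.single p (r • z q) := by
  ext i
  rcases eq_or_ne i p with rfl | hip
  · simp [realMulVecCLM_apply, Pi.single_apply]
  · simp [realMulVecCLM_apply, hip]

end RealMulVec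

/-- The continuous real-linear map `(A, B) ↦ (A + iB)z = Az + B(iz)` on pairs of real matrices. -/
noncomputable def complexMulVecCLM (z : κ → ℂ) : (ι → κ → ℝ) × (ι → κ → ℝ) →L[ℝ] (ι → ℂ) :=
  (realMulVecCLM z).coprod (realMulVecCLM (I • z))

theorem complexMulVecCLM_apply (z : κ → ℂ) (AB : (ι → κ → ℝ) × (ι → κ → ℝ)) (p : ι) :
    complexMulVecCLM z AB p = ∑ q, ((AB.1 p q : ℂ) + I * (AB.2 p q : ℂ)) * z q := by
  simp only [complexMulVecCLM, ContinuousLinearMap.coprod_apply, Pi.add_apply,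
    realMulVecCLM_apply, ← Finset.sum_add_distrib, Pi.smul_apply, real_smul, smul_eq_mul]
  exact Finset.sum_congr rfl fun q _ => by ring

theorem complexMulVecCLM_add_eq (z : κ → ℂ) (b : ι → ℂ) (AB : (ι → κ → ℝ) × (ι → κ → ℝ)) :
    complexMulVecCLM z AB + b =
      fun p => (∑ q, ((AB.1 p q : ℂ) + I * (AB.2 p q : ℂ)) * z q) + b p :=
  funext fun p => congrArg (· + b p) (complexMulVecCLM_apply z AB p)

theorem complexMulVecCLM_single_left [DecidableEq ι] [DecidableEq κ] (z : κ → ℂ) (p : ι)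
    (q : κ) : complexMulVecCLM z (Pi.single p (Pi.single q 1), 0) = Pi.single p (z q) := by
  simp [complexMulVecCLM, realMulVecCLM_single_single]

theorem complexMulVecCLM_single_right [DecidableEq ι] [DecidableEq κ] (z : κ → ℂ) (p : ι)
    (q : κ) : complexMulVecCLM z (0, Pi.single p (Pi.single q 1)) = Pi.single p (I * z q) := by
  simp [complexMulVecCLM, realMulVecCLM_single_single]

end MulVec

section AffineLayerLoss

variable {m n : ℕ} {g : (Fin m → ℂ) → ℝ} {g' : (Fin m → ℂ) →L[ℝ] ℝ} {z : Fin n → ℂ}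
  {b : Fin m → ℂ} {AB : (Fin m → Fin n → ℝ) × (Fin m → Fin n → ℝ)}

theorem affineLayerLoss_eq_comp_complexMulVecCLM :
    affineLayerLoss m n g z b = fun AB => g (complexMulVecCLM z AB + b) := by
  ext AB
  rw [affineLayerLoss, complexMulVecCLM_add_eq]

theorem hasFDerivAt_affineLayerLoss (hg : HasFDerivAt g g' (complexMulVecCLM z AB + b)) :
    HasFDerivAt (affineLayerLoss m n g z b) (g' ∘L complexMulVecCLM z) AB := by
  rw [affineLayerLoss_eq_comp_complexMulVecCLM]
  exact hg.comp AB ((complexMulVecCLM z).hasFDerivAt.add_const b)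

end AffineLayerLoss

/-- **Weight gradients in complex backpropagation.** Let `W = A + iB` be an `m × n`
complex matrix, `w₀ = Wz + b`, and let `g : ℂᵐ → ℝ` be real-differentiable at `w₀` with
complex-identified gradient `∇g(w₀) = δ` (whose `k`-th entry is `∂g/∂x_k + i·∂g/∂y_k`).
Then the Wirtinger weight gradients of `ℓ(A, B) = g((A + iB)z + b)` satisfy
`∂ℓ/∂A[p,q] + i·∂ℓ/∂B[p,q] = δ_p · conj(z_q)`, i.e. `∂ℓ/∂A + i·∂ℓ/∂B = δ·zᴴ`. -/
theorem backprop_affine_weight_gradients (m n : ℕ) (g : (Fin m → ℂ) → ℝ)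
    (z : Fin n → ℂ) (b δ : Fin m → ℂ) (A B : Fin m → Fin n → ℝ) (w₀ : Fin m → ℂ)
    (hw₀ : w₀ = fun p => (∑ q, ((A p q : ℂ) + Complex.I * (B p q : ℂ)) * z q) + b p)
    (hg : DifferentiableAt ℝ g w₀)
    (hδ : ∀ k, δ k = ((fderiv ℝ g w₀ (Pi.single k 1) : ℝ) : ℂ) +
        Complex.I * ((fderiv ℝ g w₀ (Pi.single k Complex.I) : ℝ) : ℂ)) :
    ∀ p q,
      ((fderiv ℝ (affineLayerLoss m n g z b) (A, B)
          (Pi.single p (Pi.single q (1 : ℝ)), 0) : ℝ) : ℂ) +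
        Complex.I *
          ((fderiv ℝ (affineLayerLoss m n g z b) (A, B)
            (0, Pi.single p (Pi.single q (1 : ℝ))) : ℝ) : ℂ) =
      δ p * (starRingEnd ℂ) (z q) := by
  intro p q
  have hw₀' : w₀ = complexMulVecCLM z (A, B) + b := by
    rw [hw₀, complexMulVecCLM_add_eq]
  have hℓ : HasFDerivAt (affineLayerLoss m n g z b)
      (fderiv ℝ g w₀ ∘L complexMulVecCLM z) (A, B) :=
    hasFDerivAt_affineLayerLoss (hw₀' ▸ hg.hasFDerivAt)
  let g' : Module.Dual ℝ (Fin m → ℂ) := (fderiv ℝ g w₀).toLinearMap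
  have hδ' : complexDirectionalGradient g' (Pi.single p 1) = δ p := by
    rw [complexDirectionalGradient_single, mul_one, hδ p, ContinuousLinearMap.coe_coe]
  rw [hℓ.fderiv]
  calc
    _ = complexDirectionalGradient g' (Pi.single p (z q)) := by
      simp only [complexDirectionalGradient_single, g', ContinuousLinearMap.coe_coe,
        ContinuousLinearMap.comp_apply, complexMulVecCLM_single_left,
        complexMulVecCLM_single_right]
    _ = complexDirectionalGradient g' (Pi.single p 1) * conj (z q) :=
      complexDirectionalGradient_single_eq_mul_conj g' p (z q)
    _ = δ p * conj (z q) := by rw [hδ']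
end
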